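/- Let ((A,∘),P) be a finite-dimensional averaging pre-Lie algebra, r ∈ A⊗A symmetric (τ(r) = r), and S : A → A a linear map. Define r♯ : A* → A by ⟨r♯(ξ), η⟩ = ⟨r, ξ⊗η⟩. If r♯ is a relative Rota-Baxter operator on ((A,∘),P) with respect to the representation ((A*, L*−R*, −R*), S*) — i.e. r♯(ξ)∘r♯(η) = r♯((L*−R*)(r♯(ξ))η − R*(r♯(η))ξ) for all ξ,η ∈ A* and P∘r♯ = r♯∘S* — then r is a solution of the S-admissible classical Yang-Baxter equation in ((A,∘),P): writing r = Σᵢ aᵢ⊗bᵢ, one has Σ_{i,j} (aᵢ ⊗ bᵢ∘aⱼ ⊗ bⱼ + aᵢ ⊗ aⱼ ⊗ bᵢ∘bⱼ) = Σ_{i,j} (aᵢ∘aⱼ ⊗ bᵢ ⊗ bⱼ + aᵢ ⊗ aⱼ ⊗ bⱼ∘bᵢ), together with (S⊗id)(r) = (id⊗P)(r) and (P⊗id)(r) = (id⊗S)(r). -/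

import Mathlib

/-!
The tensor `r` is recovered from `r♯`, so the `S`-admissible Yang-Baxter equation may be tested
after contracting its first tensor factor with `ξ` and its second with `η`. For symmetric `r` the
contracted equation reads `[r♯ ξ, r♯ η] = r♯ (L*_{r♯ ξ} η - L*_{r♯ η} ξ)`, where `[-, -]` is the
commutator of `∘`, and this is the antisymmetrization in `ξ` and `η` of the relative Rota-Baxter
identity: the terms involving `R*` cancel. The first condition on `P` and `S` contracts to
`P ∘ r♯ = r♯ ∘ S*`, and the second one is its flip.
-/

open TensorProduct

namespace Stmt17

variable {k A : Type*} [Field k] [CharZero k] [AddCommGroup A] [Module k A]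

/-- Transpose a family of endomorphisms of `A` to a family of endomorphisms of `A*`.
With `L = mul` and `R = mul.flip`, `L* − R* = dualTr (R − L)` and `−R* = dualTr R`. -/
noncomputable def dualTr (f : A →ₗ[k] Module.End k A) :
    A →ₗ[k] Module.End k (Module.Dual k A) :=
  (Module.Dual.transpose (R := k)).comp f

/-- The evaluation of the functional `ξ ⊗ η ∈ A*⊗A*` on an element of `A ⊗ A`. -/
noncomputable def pair (ξ η : Module.Dual k A) (r : A ⊗[k] A) : k :=
  (TensorProduct.lid k k) (TensorProduct.map ξ η r)

section Sharp

variable {R M M' N N' Q : Type*} [CommSemiring R]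
  [AddCommMonoid M] [Module R M] [AddCommMonoid M'] [Module R M'] [AddCommMonoid N] [Module R N]
  [AddCommMonoid N'] [Module R N'] [AddCommMonoid Q] [Module R Q]

/-- The linear map `t♯ : M* → N` attached to `t ∈ M ⊗ N`, contracting the first factor of `t`.
For `r ∈ A ⊗ A` it is the map `r♯` of the theorem. -/
noncomputable def sharp : M ⊗[R] N →ₗ[R] Module.Dual R M →ₗ[R] N :=
  dualTensorHom R (Module.Dual R M) N ∘ₗ (Module.Dual.eval R M).rTensor N

@[simp]
theorem sharp_tmul (m : M) (n : N) (ξ : Module.Dual R M) : sharp (m ⊗ₜ[R] n) ξ = ξ m • n := by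
  simp [sharp]

theorem apply_sharp (t : M ⊗[R] N) (ξ : Module.Dual R M) (η : Module.Dual R N) :
    η (sharp t ξ) = dualDistrib R M N (ξ ⊗ₜ η) t := by
  induction t with
  | zero => simp
  | tmul m n => simp
  | add t u ht hu => simp [ht, hu]

theorem eq_sharp_of_forall_dual [Module.Projective R N] {t : M ⊗[R] N}
    {T : Module.Dual R M →ₗ[R] N} (h : ∀ ξ η, η (T ξ) = dualDistrib R M N (ξ ⊗ₜ η) t) :
    T = sharp t :=
  LinearMap.ext fun ξ => Module.eval_apply_injective R <| LinearMap.ext fun η =>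
    (h ξ η).trans (apply_sharp t ξ η).symm

theorem sharp_map (f : M →ₗ[R] M') (g : N →ₗ[R] N') (t : M ⊗[R] N) :
    sharp (map f g t) = g ∘ₗ sharp t ∘ₗ f.dualMap := by
  induction t with
  | zero => simp
  | tmul m n => ext ξ; simp
  | add t u ht hu => simp [ht, hu, LinearMap.add_comp, LinearMap.comp_add]

theorem finsuppScalarLeft_apply_eq_sharp {ι : Type*} [DecidableEq ι] (t : (ι →₀ R) ⊗[R] N) (i : ι) :
    finsuppScalarLeft R N ι t i = sharp t (Finsupp.lapply i) := by
  induction t with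
  | zero => simp
  | tmul f n => simp [finsuppScalarLeft_apply_tmul_apply]
  | add t u ht hu => simp [ht, hu]

theorem sharp_injective [Module.Projective R M] :
    Function.Injective (sharp : M ⊗[R] N →ₗ[R] Module.Dual R M →ₗ[R] N) := by
  classical
  intro t u h
  obtain ⟨σ, hσ⟩ := Module.projective_def'.mp ‹Module.Projective R M›
  have rTensor_injective : Function.Injective (σ.rTensor N) :=
    Function.LeftInverse.injective (g := (Finsupp.linearCombination R id).rTensor N) fun v => by
      rw [← LinearMap.rTensor_comp_apply, hσ, LinearMap.rTensor_id_apply]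
  apply rTensor_injective
  apply (finsuppScalarLeft R N M).injective
  ext i
  simp only [finsuppScalarLeft_apply_eq_sharp, LinearMap.rTensor, sharp_map, h]

theorem eq_iff_sharp_sharp [Module.Projective R M] [Module.Projective R N]
    {x y : M ⊗[R] (N ⊗[R] Q)} : x = y ↔ ∀ ξ η, sharp (sharp x ξ) η = sharp (sharp y ξ) η :=
  ⟨fun h _ _ => h ▸ rfl, fun h =>
    sharp_injective <| LinearMap.ext fun ξ => sharp_injective <| LinearMap.ext (h ξ)⟩

theorem map_id_eq_id_map_iff [Module.Projective R M]
    {f : M →ₗ[R] M} {g : N →ₗ[R] N} {t : M ⊗[R] N} :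
    map f LinearMap.id t = map LinearMap.id g t ↔ sharp t ∘ₗ f.dualMap = g ∘ₗ sharp t := by
  rw [← sharp_injective.eq_iff, sharp_map, sharp_map]
  simp

theorem map_id_eq_id_map_of_comm_eq {f g : M →ₗ[R] M} {r : M ⊗[R] M}
    (hsymm : TensorProduct.comm R M M r = r)
    (h : map f LinearMap.id r = map LinearMap.id g r) :
    map g LinearMap.id r = map LinearMap.id f r := by
  rw [← hsymm, map_comm, map_comm, h]

section LegProducts

variable {ι κ : Type*} (s : Finset ι) (t : Finset κ)

theorem sharp_sharp_r₁₂_mul_r₂₃ (B : N →ₗ[R] M' →ₗ[R] Q) (a : ι → M) (b : ι → N) (a' : κ → M')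
    (b' : κ → N') (ξ : Module.Dual R M) (η : Module.Dual R Q) :
    sharp (sharp (∑ i ∈ s, ∑ j ∈ t, a i ⊗ₜ[R] (B (b i) (a' j) ⊗ₜ[R] b' j)) ξ) η =
      sharp (∑ j ∈ t, a' j ⊗ₜ b' j) ((B (sharp (∑ i ∈ s, a i ⊗ₜ b i) ξ)).dualMap η) := by
  simp [LinearMap.sum_apply, Finset.sum_smul, mul_smul, Finset.sum_comm (s := s)]

theorem sharp_sharp_r₁₃_mul_r₂₃ (B : N →ₗ[R] N' →ₗ[R] Q) (a : ι → M) (b : ι → N) (a' : κ → M')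
    (b' : κ → N') (ξ : Module.Dual R M) (η : Module.Dual R M') :
    sharp (sharp (∑ i ∈ s, ∑ j ∈ t, a i ⊗ₜ[R] (a' j ⊗ₜ[R] B (b i) (b' j))) ξ) η =
      B (sharp (∑ i ∈ s, a i ⊗ₜ b i) ξ) (sharp (∑ j ∈ t, a' j ⊗ₜ b' j) η) := by
  simp [LinearMap.sum_apply, Finset.smul_sum, smul_comm (η _), Finset.sum_comm (s := s)]

theorem sharp_sharp_r₁₂_mul_r₁₃ (B : M →ₗ[R] M' →ₗ[R] Q) (a : ι → M) (b : ι → N) (a' : κ → M')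
    (b' : κ → N') (ξ : Module.Dual R Q) (η : Module.Dual R N) :
    sharp (sharp (∑ i ∈ s, ∑ j ∈ t, B (a i) (a' j) ⊗ₜ[R] (b i ⊗ₜ[R] b' j)) ξ) η =
      sharp (∑ j ∈ t, a' j ⊗ₜ b' j)
        ((B (sharp (TensorProduct.comm R M N (∑ i ∈ s, a i ⊗ₜ b i)) η)).dualMap ξ) := by
  simp [LinearMap.sum_apply, Finset.sum_smul, mul_smul, smul_comm (η _), Finset.sum_comm (s := s)]

end LegProducts

end Sharp

section RotaBaxter

variable {R M : Type*} [CommRing R] [AddCommGroup M] [Module R M]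

/-- `T : M* → M` is a relative Rota-Baxter operator on `(M, mul)` with respect to the
representation `(M*, L* - R*, -R*)`. As `L*` and `R*` are the negatives of transposes,
`L*_x - R*_x` is the transpose of `R_x - L_x`, and `-R*_x` is that of `R_x`. -/
def IsRelativeRotaBaxter (mul : M →ₗ[R] M →ₗ[R] M) (T : Module.Dual R M →ₗ[R] M) : Prop :=
  ∀ ξ η, mul (T ξ) (T η) =
    T (((mul.flip - mul) (T ξ)).dualMap η + (mul.flip (T η)).dualMap ξ)

theorem IsRelativeRotaBaxter.commutator_eq {mul : M →ₗ[R] M →ₗ[R] M}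
    {T : Module.Dual R M →ₗ[R] M} (hT : IsRelativeRotaBaxter mul T) (ξ η : Module.Dual R M) :
    mul (T ξ) (T η) - mul (T η) (T ξ) =
      T ((mul (T η)).dualMap ξ - (mul (T ξ)).dualMap η) := by
  have transpose_sub (x : M) (ζ : Module.Dual R M) : ((mul.flip - mul) x).dualMap ζ =
      (mul.flip x).dualMap ζ - (mul x).dualMap ζ := by
    ext; simp
  rw [hT ξ η, hT η ξ, ← map_sub, transpose_sub, transpose_sub]
  congr 1
  abel

theorem cybe_iff_commutator_eq [Module.Projective R M] {ι : Type*} {s : Finset ι} {a b : ι → M}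
    {r : M ⊗[R] M} (mul : M →ₗ[R] M →ₗ[R] M) (hsymm : TensorProduct.comm R M M r = r)
    (hr : r = ∑ i ∈ s, a i ⊗ₜ[R] b i) :
    ∑ i ∈ s, ∑ j ∈ s,
        (a i ⊗ₜ[R] (mul (b i) (a j) ⊗ₜ[R] b j) + a i ⊗ₜ[R] (a j ⊗ₜ[R] mul (b i) (b j))) =
      ∑ i ∈ s, ∑ j ∈ s,
        (mul (a i) (a j) ⊗ₜ[R] (b i ⊗ₜ[R] b j) + a i ⊗ₜ[R] (a j ⊗ₜ[R] mul (b j) (b i))) ↔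
    ∀ ξ η, mul (sharp r ξ) (sharp r η) - mul (sharp r η) (sharp r ξ) =
      sharp r ((mul (sharp r η)).dualMap ξ - (mul (sharp r ξ)).dualMap η) := by
  have contract_r₂₃_mul_r₁₃ := sharp_sharp_r₁₃_mul_r₂₃ s s mul.flip a b a b
  simp only [LinearMap.flip_apply] at contract_r₂₃_mul_r₁₃
  simp only [eq_iff_sharp_sharp, Finset.sum_add_distrib, map_add, LinearMap.add_apply,
    contract_r₂₃_mul_r₁₃, sharp_sharp_r₁₂_mul_r₂₃, sharp_sharp_r₁₃_mul_r₂₃,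
    sharp_sharp_r₁₂_mul_r₁₃, ← hr, hsymm, map_sub]
  refine forall₂_congr fun ξ η => ?_
  rw [sub_eq_sub_iff_add_eq_add, add_comm (mul _ _)]

theorem relative_RB_gives_admissible_CYBE_general [Module.Projective R M]
    (mul : M →ₗ[R] M →ₗ[R] M) (P S : M →ₗ[R] M) (r : M ⊗[R] M)
    (hsymm : TensorProduct.comm R M M r = r) (hT : IsRelativeRotaBaxter mul (sharp r))
    (hPT : ∀ ξ, P (sharp r ξ) = sharp r (S.dualMap ξ)) :
    (∀ (ι : Type*) (s : Finset ι) (a b : ι → M), r = ∑ i ∈ s, a i ⊗ₜ[R] b i →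
      ∑ i ∈ s, ∑ j ∈ s,
          (a i ⊗ₜ[R] (mul (b i) (a j) ⊗ₜ[R] b j) + a i ⊗ₜ[R] (a j ⊗ₜ[R] mul (b i) (b j))) =
        ∑ i ∈ s, ∑ j ∈ s,
          (mul (a i) (a j) ⊗ₜ[R] (b i ⊗ₜ[R] b j) + a i ⊗ₜ[R] (a j ⊗ₜ[R] mul (b j) (b i)))) ∧
    map S LinearMap.id r = map LinearMap.id P r ∧
    map P LinearMap.id r = map LinearMap.id S r := by
  have hSP : map S LinearMap.id r = map LinearMap.id P r :=
    map_id_eq_id_map_iff.mpr (LinearMap.ext fun ξ => (hPT ξ).symm)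
  exact ⟨fun _ _ _ _ hr => (cybe_iff_commutator_eq mul hsymm hr).mpr hT.commutator_eq,
    hSP, map_id_eq_id_map_of_comm_eq hsymm hSP⟩

end RotaBaxter

/-- Let `((A,∘),P)` be a finite-dimensional averaging pre-Lie algebra, `r ∈ A⊗A`
symmetric, `S : A → A` linear, and `r♯ : A* → A` given by `⟨r♯(ξ),η⟩ = ⟨r, ξ⊗η⟩`.
If `r♯` is a relative Rota-Baxter operator on `((A,∘),P)` with respect to the
representation `((A*, L*−R*, −R*), S*)`, then `r` is a solution of the `S`-admissible
classical Yang-Baxter equation in `((A,∘),P)`. -/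
theorem relative_RB_gives_admissible_CYBE [FiniteDimensional k A]
    (mul : A →ₗ[k] A →ₗ[k] A) (P S : A →ₗ[k] A)
    (r : A ⊗[k] A) (rsharp : Module.Dual k A →ₗ[k] A)
    (hpre : ∀ x y z : A,
      mul (mul x y) z - mul x (mul y z) = mul (mul y x) z - mul y (mul x z))
    (havg1 : ∀ x y : A, mul (P x) (P y) = P (mul (P x) y))
    (havg2 : ∀ x y : A, mul (P x) (P y) = P (mul x (P y)))
    (hsymm : TensorProduct.comm k A A r = r)
    (hrsharp : ∀ ξ η : Module.Dual k A, η (rsharp ξ) = pair ξ η r)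
    (hT : ∀ ξ η : Module.Dual k A,
      mul (rsharp ξ) (rsharp η)
        = rsharp (dualTr (mul.flip - mul) (rsharp ξ) η
            + dualTr mul.flip (rsharp η) ξ))
    (hPT : ∀ ξ : Module.Dual k A, P (rsharp ξ) = rsharp (S.dualMap ξ)) :
    (∀ (ι : Type) (s : Finset ι) (a b : ι → A),
      r = ∑ i ∈ s, a i ⊗ₜ[k] b i →
      ∑ i ∈ s, ∑ j ∈ s,
          ((a i) ⊗ₜ[k] ((mul (b i) (a j)) ⊗ₜ[k] (b j))
            + (a i) ⊗ₜ[k] ((a j) ⊗ₜ[k] (mul (b i) (b j))))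
        = ∑ i ∈ s, ∑ j ∈ s,
          ((mul (a i) (a j)) ⊗ₜ[k] ((b i) ⊗ₜ[k] (b j))
            + (a i) ⊗ₜ[k] ((a j) ⊗ₜ[k] (mul (b j) (b i))))) ∧
    TensorProduct.map S LinearMap.id r = TensorProduct.map LinearMap.id P r ∧
    TensorProduct.map P LinearMap.id r = TensorProduct.map LinearMap.id S r := by
  obtain rfl : rsharp = sharp r := eq_sharp_of_forall_dual hrsharp
  exact relative_RB_gives_admissible_CYBE_general mul P S r hsymm hT hPT

end Stmt17
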